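/- Let R be a ring and let {U_i : i ∈ I} and {V_j : j ∈ J} be two families of nonzero uniserial right R-modules. If there exist bijections σ, τ : I → J such that U_i and V_{σ(i)} belong to the same monogeny class and U_i and V_{τ(i)} belong to the same epigeny class for every i ∈ I, then the direct products ∏_{i∈I} U_i and ∏_{j∈J} V_j are isomorphic right R-modules. -/

import Mathlib

/-- Two modules belong to the same monogeny class if there are injective homomorphisms
in both directions. -/
def SameMonogenyClass (R : Type*) [Ring R] (M N : Type*) [AddCommGroup M] [Module R M]
    [AddCommGroup N] [Module R N] : Prop :=
  (∃ f : M →ₗ[R] N, Function.Injective f) ∧ ∃ g : N →ₗ[R] M, Function.Injective g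

/-- Two modules belong to the same epigeny class if there are surjective homomorphisms
in both directions. -/
def SameEpigenyClass (R : Type*) [Ring R] (M N : Type*) [AddCommGroup M] [Module R M]
    [AddCommGroup N] [Module R N] : Prop :=
  (∃ f : M →ₗ[R] N, Function.Surjective f) ∧ ∃ g : N →ₗ[R] M, Function.Surjective g

/-- A module is uniserial if its lattice of submodules is linearly ordered by inclusion. -/
def IsUniserialModule (R : Type*) [Ring R] (M : Type*) [AddCommGroup M] [Module R M] : Prop :=
  ∀ N P : Submodule R M, N ≤ P ∨ P ≤ N

/-!
Call a module biuniform if it is uniform and hollow. If `C` has the monogeny class of `A` and the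
epigeny class of `B`, all biuniform, then `A × B ≃ C × X` for some `X` with the monogeny class of
`B` and the epigeny class of `A`: the given maps compose to an injective endomorphism of `C` that
factors through `A` and a surjective one that factors through `B`, and unless one of these is
bijective, their sum is, so that `C` is a direct summand of `A × B`. Consequently the
existence of a module with the monogeny class of `M` and the epigeny class of `N` is an equivalence
relation between biuniform modules `M` and `N`.

After reindexing by `σ`, the epigeny classes of `U` and `V` are matched by a permutation `π`, and
there is an involution `β` preserving the cycles of `π` such that `β ∘ π` is an involution too.
The equivalence relation supplies modules `W i` with the monogeny class of `V i` and the epigeny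
class of `V (β i)`. Passing from `V` to `W` and from `W` to `U` only exchanges epigeny classes
along an involution, so each step is an isomorphism of products by the case of two modules.
-/

section Modules

variable {R : Type*} [Ring R] {M N P A B C D : Type*}
  [AddCommGroup M] [Module R M] [AddCommGroup N] [Module R N] [AddCommGroup P] [Module R P]
  [AddCommGroup A] [Module R A] [AddCommGroup B] [Module R B]
  [AddCommGroup C] [Module R C] [AddCommGroup D] [Module R D]

variable (R M) in
/-- A module is uniform if it is nonzero and any two of its nonzero submodules intersect
nontrivially; `InfIrred` includes the former, since it excludes the greatest element. -/
def IsUniformModule : Prop := InfIrred (⊥ : Submodule R M)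

variable (R M) in
/-- A module is hollow (or couniform) if it is nonzero and the sum of any two of its proper
submodules is proper; `SupIrred` includes the former, since it excludes the least element. -/
def IsHollowModule : Prop := SupIrred (⊤ : Submodule R M)

variable (R M) in
/-- A module is biuniform if it is uniform and hollow, the common generalization of nonzero
uniserial modules to which the whole argument applies. -/
structure IsBiuniformModule : Prop where
  uniform : IsUniformModule R M
  hollow : IsHollowModule R M

namespace IsUniformModule

theorem nontrivial (hM : IsUniformModule R M) : Nontrivial M :=
  (Submodule.nontrivial_iff R).1 ⟨⊥, ⊤, hM.ne_top⟩

theorem of_injective [Nontrivial M] (hN : IsUniformModule R N) {f : M →ₗ[R] N}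
    (hf : Function.Injective f) : IsUniformModule R M := by
  refine ⟨not_isMax_bot, fun S T hST => ?_⟩
  have hmap : S.map f ⊓ T.map f = ⊥ := by rw [← Submodule.map_inf f hf, hST, Submodule.map_bot]
  have eq_bot {Q : Submodule R M} (hQ : Q.map f = ⊥) : Q = ⊥ :=
    Submodule.map_injective_of_injective hf (by rw [hQ, Submodule.map_bot])
  exact (hN.2 hmap).imp eq_bot eq_bot

theorem injective_or_injective_of_add (hM : IsUniformModule R M) {f g : M →ₗ[R] N}
    (h : Function.Injective (f + g)) : Function.Injective f ∨ Function.Injective g := by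
  simp only [← LinearMap.ker_eq_bot] at h ⊢
  refine hM.2 (eq_bot_iff.2 fun x hx => ?_)
  rw [← h, LinearMap.mem_ker, LinearMap.add_apply, LinearMap.mem_ker.1 hx.1,
    LinearMap.mem_ker.1 hx.2, add_zero]

end IsUniformModule

namespace IsHollowModule

theorem nontrivial (hM : IsHollowModule R M) : Nontrivial M :=
  (Submodule.nontrivial_iff R).1 ⟨⊤, ⊥, hM.ne_bot⟩

theorem of_surjective [Nontrivial N] (hM : IsHollowModule R M) {f : M →ₗ[R] N}
    (hf : Function.Surjective f) : IsHollowModule R N := by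
  refine ⟨not_isMin_top, fun S T hST => ?_⟩
  have hcomap : S.comap f ⊔ T.comap f = ⊤ := by
    refine eq_top_iff.2 fun x _ => ?_
    obtain ⟨s, hs, t, ht, hst⟩ := Submodule.mem_sup.1 (hST ▸ Submodule.mem_top : f x ∈ S ⊔ T)
    obtain ⟨a, rfl⟩ := hf s
    refine Submodule.mem_sup.2 ⟨a, hs, x - a, ?_, add_sub_cancel a x⟩
    rwa [Submodule.mem_comap, map_sub, ← hst, add_sub_cancel_left]
  have eq_top {Q : Submodule R N} (hQ : Q.comap f = ⊤) : Q = ⊤ :=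
    Submodule.comap_injective_of_surjective hf hQ
  exact (hM.2 hcomap).imp eq_top eq_top

theorem surjective_or_surjective_of_add (hN : IsHollowModule R N) {f g : M →ₗ[R] N}
    (h : Function.Surjective (f + g)) : Function.Surjective f ∨ Function.Surjective g := by
  simp only [← LinearMap.range_eq_top]
  refine hN.2 (eq_top_iff.2 fun y _ => ?_)
  obtain ⟨x, rfl⟩ := h y
  exact Submodule.add_mem_sup ⟨x, rfl⟩ ⟨x, rfl⟩

end IsHollowModule

theorem IsUniserialModule.isBiuniformModule [Nontrivial M] (hM : IsUniserialModule R M) :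
    IsBiuniformModule R M where
  uniform := ⟨not_isMax_bot, fun S T h => (hM S T).imp
    (fun hST => by rwa [inf_eq_left.2 hST] at h) fun hTS => by rwa [inf_eq_right.2 hTS] at h⟩
  hollow := ⟨not_isMin_top, fun S T h => (hM S T).symm.imp
    (fun hTS => by rwa [sup_eq_left.2 hTS] at h) fun hST => by rwa [sup_eq_right.2 hST] at h⟩

theorem bijective_add_of_injective_of_surjective (hM : IsUniformModule R M)
    (hN : IsHollowModule R N) {f g : M →ₗ[R] N}
    (hf : Function.Injective f) (hf' : ¬ Function.Surjective f)
    (hg : Function.Surjective g) (hg' : ¬ Function.Injective g) :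
    Function.Bijective (f + g) := by
  constructor
  · have h : Function.Injective ((f + g) + -g) := by rwa [add_neg_cancel_right]
    exact (hM.injective_or_injective_of_add h).resolve_right fun h =>
      hg' (Function.Injective.of_comp (f := Neg.neg) h)
  · have h : Function.Surjective (-f + (f + g)) := by rwa [neg_add_cancel_left]
    exact (hN.surjective_or_surjective_of_add h).resolve_left fun h =>
      hf' fun y => (h (-y)).imp fun _ hx => neg_injective hx

namespace SameMonogenyClass

theorem of_linearEquiv (e : M ≃ₗ[R] N) : SameMonogenyClass R M N :=
  ⟨⟨e, e.injective⟩, e.symm, e.symm.injective⟩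

theorem symm (h : SameMonogenyClass R M N) : SameMonogenyClass R N M :=
  ⟨h.2, h.1⟩

theorem trans (h : SameMonogenyClass R M N) (h' : SameMonogenyClass R N P) :
    SameMonogenyClass R M P := by
  obtain ⟨⟨f, hf⟩, g, hg⟩ := h
  obtain ⟨⟨f', hf'⟩, g', hg'⟩ := h'
  exact ⟨⟨f' ∘ₗ f, hf'.comp hf⟩, g ∘ₗ g', hg.comp hg'⟩

theorem isUniformModule (h : SameMonogenyClass R M N) (hM : IsUniformModule R M) :
    IsUniformModule R N := by
  obtain ⟨⟨f, hf⟩, g, hg⟩ := h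
  have := hM.nontrivial
  have := hf.nontrivial
  exact hM.of_injective hg

end SameMonogenyClass

namespace SameEpigenyClass

theorem of_linearEquiv (e : M ≃ₗ[R] N) : SameEpigenyClass R M N :=
  ⟨⟨e, e.surjective⟩, e.symm, e.symm.surjective⟩

theorem symm (h : SameEpigenyClass R M N) : SameEpigenyClass R N M :=
  ⟨h.2, h.1⟩

theorem trans (h : SameEpigenyClass R M N) (h' : SameEpigenyClass R N P) :
    SameEpigenyClass R M P := by
  obtain ⟨⟨f, hf⟩, g, hg⟩ := h
  obtain ⟨⟨f', hf'⟩, g', hg'⟩ := h'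
  exact ⟨⟨f' ∘ₗ f, hf'.comp hf⟩, g ∘ₗ g', hg.comp hg'⟩

theorem isHollowModule (h : SameEpigenyClass R M N) (hM : IsHollowModule R M) :
    IsHollowModule R N := by
  obtain ⟨⟨f, hf⟩, g, hg⟩ := h
  have := hM.nontrivial
  have := hg.nontrivial
  exact hM.of_surjective hf

end SameEpigenyClass

theorem nonempty_linearEquiv_of_sameClasses (hM : IsUniformModule R M) (hN : IsHollowModule R N)
    (hm : SameMonogenyClass R M N) (he : SameEpigenyClass R M N) : Nonempty (M ≃ₗ[R] N) := by
  obtain ⟨f, hf⟩ := hm.1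
  obtain ⟨g, hg⟩ := he.1
  by_cases hf' : Function.Surjective f
  · exact ⟨.ofBijective f ⟨hf, hf'⟩⟩
  by_cases hg' : Function.Injective g
  · exact ⟨.ofBijective g ⟨hg', hg⟩⟩
  exact ⟨.ofBijective (f + g) (bijective_add_of_injective_of_surjective hM hN hf hf' hg hg')⟩

/-- The projection onto the kernel of a split epimorphism, along the range of its section `s`. -/
def kerProj (T : M →ₗ[R] N) (s : N →ₗ[R] M) (h : T ∘ₗ s = LinearMap.id) :
    M →ₗ[R] LinearMap.ker T :=
  (LinearMap.id - s ∘ₗ T).codRestrict _ fun x => by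
    have hTx : T (s (T x)) = T x := LinearMap.congr_fun h (T x)
    simp [hTx]

section SplitSum

variable {u : A →ₗ[R] C} {v : B →ₗ[R] C} {f : C →ₗ[R] A} {g : C →ₗ[R] B}

theorem coprod_comp_prod_eq_id (h : u ∘ₗ f + v ∘ₗ g = LinearMap.id) :
    u.coprod v ∘ₗ f.prod g = LinearMap.id := by
  rw [LinearMap.coprod_comp_prod, h]

theorem nonempty_prod_linearEquiv_prod_ker_coprod (h : u ∘ₗ f + v ∘ₗ g = LinearMap.id) :
    Nonempty ((A × B) ≃ₗ[R] (C × LinearMap.ker (u.coprod v))) :=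
  ⟨(lequivProdOfRightSplitExact (LinearMap.ker (u.coprod v)).injective_subtype
    (Submodule.range_subtype _) (coprod_comp_prod_eq_id h)).symm ≪≫ₗ LinearEquiv.prodComm R _ _⟩

theorem sameMonogenyClass_ker_coprod (hB : IsUniformModule R B)
    (h : u ∘ₗ f + v ∘ₗ g = LinearMap.id) (hu : Function.Injective u)
    (hv : Function.Surjective v) (hvg : ¬ Function.Injective (v ∘ₗ g)) :
    SameMonogenyClass R (LinearMap.ker (u.coprod v)) B := by
  let projB : LinearMap.ker (u.coprod v) →ₗ[R] B := LinearMap.snd R A B ∘ₗ Submodule.subtype _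
  let r : B →ₗ[R] LinearMap.ker (u.coprod v) :=
    kerProj _ _ (coprod_comp_prod_eq_id h) ∘ₗ LinearMap.inr R A B
  have h_projB : Function.Injective projB := by
    refine (injective_iff_map_eq_zero projB).2 ?_
    rintro ⟨⟨a, b⟩, hab⟩ (rfl : b = 0)
    have ha : a = 0 := hu (by simpa using hab)
    simp [ha]
  have h_sum : projB ∘ₗ r + g ∘ₗ v = LinearMap.id := by
    ext b
    simp [projB, r, kerProj]
  have h_comp : Function.Injective (projB ∘ₗ r) := by
    have h_inj : Function.Injective (projB ∘ₗ r + g ∘ₗ v) := h_sum ▸ Function.injective_id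
    refine (hB.injective_or_injective_of_add h_inj).resolve_right fun hgv => hvg ?_
    have hv_inj : Function.Injective v := Function.Injective.of_comp (f := g) hgv
    exact hv_inj.comp (Function.Injective.of_comp_right hgv hv)
  exact ⟨⟨projB, h_projB⟩, r, Function.Injective.of_comp (f := projB) h_comp⟩

theorem sameEpigenyClass_ker_coprod (hA : IsHollowModule R A)
    (h : u ∘ₗ f + v ∘ₗ g = LinearMap.id) (hf : Function.Injective f)
    (hg : Function.Surjective g) (hv : Function.Surjective v)
    (huf : ¬ Function.Surjective (u ∘ₗ f)) :
    SameEpigenyClass R (LinearMap.ker (u.coprod v)) A := by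
  let projA : LinearMap.ker (u.coprod v) →ₗ[R] A := LinearMap.fst R A B ∘ₗ Submodule.subtype _
  let r : A →ₗ[R] LinearMap.ker (u.coprod v) :=
    kerProj _ _ (coprod_comp_prod_eq_id h) ∘ₗ LinearMap.inl R A B
  have hr (a : A) : (r a : A × B) = (a - f (u a), -g (u a)) := by
    simp [r, kerProj]
  have h_projA : Function.Surjective projA := fun a => by
    obtain ⟨b, hb⟩ := hv (-u a)
    exact ⟨⟨(a, b), by simp [hb]⟩, rfl⟩
  have h_sum : projA ∘ₗ r + f ∘ₗ u = LinearMap.id := by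
    ext a
    simp [projA, hr]
  have h_comp : Function.Surjective (projA ∘ₗ r) := by
    have h_surj : Function.Surjective (projA ∘ₗ r + f ∘ₗ u) := h_sum ▸ Function.surjective_id
    refine (hA.surjective_or_surjective_of_add h_surj).resolve_right fun hfu => huf ?_
    have hf_surj : Function.Surjective f := Function.Surjective.of_comp (g := u) hfu
    exact (Function.Surjective.of_comp_left (f := f) (g := u) hfu hf).comp hf_surj
  have h_ker : LinearMap.ker projA ≤ LinearMap.range r := by
    rintro ⟨⟨a, b⟩, hab⟩ (rfl : a = 0)
    have hvb : v b = 0 := by simpa using hab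
    obtain ⟨c, rfl⟩ := hg b
    have huc : u (f c) = c := by simpa [hvb] using LinearMap.congr_fun h c
    exact ⟨-f c, Subtype.ext (by simp [hr, huc])⟩
  have h_r : Function.Surjective r := by
    rw [← LinearMap.range_eq_top, ← sup_eq_left.2 h_ker, ← Submodule.comap_map_eq,
      ← LinearMap.range_comp, LinearMap.range_eq_top.2 h_comp, Submodule.comap_top]
  exact ⟨⟨projA, h_projA⟩, r, h_r⟩

end SplitSum

theorem exists_prod_linearEquiv_prod_of_sameClasses
    (hA : IsBiuniformModule R A) (hB : IsBiuniformModule R B)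
    (hm : SameMonogenyClass R C A) (he : SameEpigenyClass R C B) :
    ∃ X : Submodule R (A × B), SameMonogenyClass R X B ∧ SameEpigenyClass R X A ∧
      Nonempty ((A × B) ≃ₗ[R] (C × X)) := by
  have ⟨⟨f, hf⟩, f', hf'⟩ := hm
  have ⟨⟨g, hg⟩, g', hg'⟩ := he
  by_cases hff : Function.Surjective (f' ∘ₗ f)
  · let eAC : A ≃ₗ[R] C := .ofBijective f' ⟨hf', Function.Surjective.of_comp (g := f) hff⟩
    let eB := LinearEquiv.ofInjective (LinearMap.inr R A B) LinearMap.inr_injective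
    exact ⟨_, .of_linearEquiv eB.symm,
      (SameEpigenyClass.of_linearEquiv eB.symm).trans (he.symm.trans (.of_linearEquiv eAC.symm)),
      ⟨eAC.prodCongr eB⟩⟩
  by_cases hgg : Function.Injective (g' ∘ₗ g)
  · let eCB : C ≃ₗ[R] B := .ofBijective g ⟨Function.Injective.of_comp (f := g') hgg, hg⟩
    let eA := LinearEquiv.ofInjective (LinearMap.inl R A B) LinearMap.inl_injective
    exact ⟨_,
      (SameMonogenyClass.of_linearEquiv eA.symm).trans (hm.symm.trans (.of_linearEquiv eCB)),
      .of_linearEquiv eA.symm, ⟨LinearEquiv.prodComm R A B ≪≫ₗ eCB.symm.prodCongr eA⟩⟩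
  have hbij : Function.Bijective (f' ∘ₗ f + g' ∘ₗ g) :=
    bijective_add_of_injective_of_surjective (hm.symm.isUniformModule hA.uniform)
      (he.symm.isHollowModule hB.hollow) (hf'.comp hf) hff (hg'.comp hg) hgg
  let θ : C ≃ₗ[R] C := .ofBijective _ hbij
  let u : A →ₗ[R] C := θ.symm ∘ₗ f'
  let v : B →ₗ[R] C := θ.symm ∘ₗ g'
  have hsplit : u ∘ₗ f + v ∘ₗ g = LinearMap.id := LinearMap.ext fun c =>
    (map_add θ.symm _ _).symm.trans (θ.symm_apply_apply c)
  have hu : Function.Injective u := θ.symm.injective.comp hf'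
  have hv : Function.Surjective v := θ.symm.surjective.comp hg'
  have huf : ¬ Function.Surjective (u ∘ₗ f) := fun h =>
    hff (Function.Surjective.of_comp_left (f := θ.symm) h θ.symm.injective)
  have hvg : ¬ Function.Injective (v ∘ₗ g) := fun h =>
    hgg (Function.Injective.of_comp (f := θ.symm) h)
  exact ⟨_, sameMonogenyClass_ker_coprod hB.uniform hsplit hu hv hvg,
    sameEpigenyClass_ker_coprod hA.hollow hsplit hf hg hv huf,
    nonempty_prod_linearEquiv_prod_ker_coprod hsplit⟩

theorem nonempty_prod_linearEquiv_prod_of_sameClasses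
    (hA : IsBiuniformModule R A) (hB : IsBiuniformModule R B)
    (hCA : SameMonogenyClass R C A) (hCB : SameEpigenyClass R C B)
    (hDB : SameMonogenyClass R D B) (hDA : SameEpigenyClass R D A) :
    Nonempty ((A × B) ≃ₗ[R] (C × D)) := by
  obtain ⟨X, hXB, hXA, ⟨e⟩⟩ := exists_prod_linearEquiv_prod_of_sameClasses hA hB hCA hCB
  obtain ⟨d⟩ := nonempty_linearEquiv_of_sameClasses (hXB.symm.isUniformModule hB.uniform)
    (hDA.symm.isHollowModule hA.hollow) (hXB.trans hDB.symm) (hXA.trans hDA.symm)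
  exact ⟨e ≪≫ₗ (LinearEquiv.refl R C).prodCongr d⟩

variable (R M N) in
/-- Some module has the monogeny class of `M` and the epigeny class of `N`. Such a module embeds
into `M`, so asking for a submodule of `M` loses nothing (see `HasMixedClass.of_sameClasses`) and
keeps the relation independent of a universe for the witness. -/
def HasMixedClass : Prop :=
  ∃ X : Submodule R M, SameMonogenyClass R X M ∧ SameEpigenyClass R X N

namespace HasMixedClass

theorem of_sameClasses (hm : SameMonogenyClass R P M) (he : SameEpigenyClass R P N) :
    HasMixedClass R M N := by
  obtain ⟨f, hf⟩ := hm.1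
  let e : LinearMap.range f ≃ₗ[R] P := (LinearEquiv.ofInjective f hf).symm
  exact ⟨_, (SameMonogenyClass.of_linearEquiv e).trans hm,
    (SameEpigenyClass.of_linearEquiv e).trans he⟩

variable (R M) in
theorem refl : HasMixedClass R M M :=
  of_sameClasses (.of_linearEquiv (.refl R M)) (.of_linearEquiv (.refl R M))

theorem symm (hM : IsBiuniformModule R M) (hN : IsBiuniformModule R N)
    (h : HasMixedClass R M N) : HasMixedClass R N M := by
  obtain ⟨X, hXM, hXN⟩ := h
  obtain ⟨Y, hYN, hYM, -⟩ := exists_prod_linearEquiv_prod_of_sameClasses hM hN hXM hXN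
  exact of_sameClasses hYN hYM

theorem trans (hM : IsBiuniformModule R M) (hN : IsBiuniformModule R N)
    (hP : IsBiuniformModule R P) (hMN : HasMixedClass R M N) (hNP : HasMixedClass R N P) :
    HasMixedClass R M P := by
  obtain ⟨X, hXM, hXN⟩ := hMN
  obtain ⟨Y, hYN, hYP⟩ := hNP
  have hX : IsBiuniformModule R X :=
    ⟨hXM.symm.isUniformModule hM.uniform, hXN.symm.isHollowModule hN.hollow⟩
  have hY : IsBiuniformModule R Y :=
    ⟨hYN.symm.isUniformModule hN.uniform, hYP.symm.isHollowModule hP.hollow⟩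
  obtain ⟨Z, hZX, hZY, -⟩ := exists_prod_linearEquiv_prod_of_sameClasses hY hX hYN.symm hXN.symm
  exact of_sameClasses (hZX.trans hXM) (hZY.trans hYP)

theorem equivalence {I : Type*} {V : I → Type*} [∀ i, AddCommGroup (V i)] [∀ i, Module R (V i)]
    (hV : ∀ i, IsBiuniformModule R (V i)) :
    Equivalence fun i j => HasMixedClass R (V i) (V j) where
  refl i := refl R (V i)
  symm {i j} h := h.symm (hV i) (hV j)
  trans {i j k} hij hjk := hij.trans (hV i) (hV j) (hV k) hjk

end HasMixedClass

end Modules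

section Permutations

variable {I : Type*} {π : Equiv.Perm I}

theorem rel_of_sameCycle {r : I → I → Prop} (hr : Equivalence r) (h : ∀ i, r i (π i)) {i j : I}
    (hij : π.SameCycle i j) : r i j := by
  obtain ⟨n, rfl⟩ := hij
  refine zpow_induction_left (P := fun ρ : Equiv.Perm I => r i (ρ i)) (hr.refl i)
    (fun ρ hρ => hr.trans hρ (h (ρ i))) (fun ρ hρ => ?_) n
  have hstep : r (π⁻¹ (ρ i)) (ρ i) := by simpa using h (π⁻¹ (ρ i))
  exact hr.trans hρ (hr.symm hstep)

theorem zpow_neg_apply_eq_of_zpow_apply_eq {m n : ℤ} {x : I} (h : (π ^ m) x = (π ^ n) x) :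
    (π ^ (-m)) x = (π ^ (-n)) x := by
  have hshift := congrArg (π ^ (-m - n)) h
  simp only [← Equiv.Perm.mul_apply, ← zpow_add] at hshift
  rwa [show -m - n + m = -n by ring, show -m - n + n = -m by ring, eq_comm] at hshift

theorem exists_involutive_involutive_comp (π : Equiv.Perm I) :
    ∃ β : I → I, Function.Involutive β ∧ Function.Involutive (β ∘ π) ∧
      ∀ i, π.SameCycle i (β i) := by
  let r (i : I) : I := (Quotient.mk (Equiv.Perm.SameCycle.setoid π) i).out
  have r_sameCycle (i : I) : π.SameCycle (r i) i :=
    Quotient.exact (s := Equiv.Perm.SameCycle.setoid π) (Quotient.out_eq _)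
  have r_eq {i j : I} (h : π.SameCycle i j) : r i = r j :=
    congrArg Quotient.out (Quotient.sound (s := Equiv.Perm.SameCycle.setoid π) h)
  choose n hn using r_sameCycle
  -- On the cycle of `x = r i`, `β` is the reflection `π ^ m x ↦ π ^ (-m) x`.
  let β (i : I) : I := (π ^ (-n i)) (r i)
  have hβ {i j : I} {m : ℤ} (h : (π ^ m) (r i) = j) : β j = (π ^ (-m)) (r i) := by
    have hr : r j = r i := r_eq (.trans (.symm ⟨m, h⟩) ⟨n i, hn i⟩)
    have hnj : (π ^ n j) (r i) = (π ^ m) (r i) := by rw [h, ← hr, hn]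
    simpa only [β, hr] using zpow_neg_apply_eq_of_zpow_apply_eq hnj
  refine ⟨β, fun i => ?_, fun i => ?_, fun i => .trans (.symm ⟨n i, hn i⟩) ⟨-n i, rfl⟩⟩
  · rw [hβ (i := i) (m := -n i) rfl, neg_neg, hn]
  · have hπ {m : ℤ} {j : I} (h : (π ^ m) (r i) = j) : (π ^ (1 + m)) (r i) = π j := by
      rw [zpow_one_add, Equiv.Perm.mul_apply, h]
    have hβπ : (β ∘ π) i = (π ^ (-(1 + n i))) (r i) := hβ (hπ (hn i))
    calc (β ∘ π) ((β ∘ π) i) = (π ^ (-(1 + -(1 + n i)))) (r i) := hβ (hπ hβπ.symm)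
      _ = (π ^ n i) (r i) := by congr 2; ring
      _ = i := hn i

end Permutations

section Products

variable {R : Type*} [Semiring R] {I : Type*} {M N : I → Type*}
  [∀ i, AddCommMonoid (M i)] [∀ i, Module R (M i)]
  [∀ i, AddCommMonoid (N i)] [∀ i, Module R (N i)]

theorem nonempty_pi_linearEquiv_of_fibers {Q : Type*} (p : I → Q)
    (h : ∀ q, Nonempty ((∀ i : {i // p i = q}, M i) ≃ₗ[R] (∀ i : {i // p i = q}, N i))) :
    Nonempty ((∀ i, M i) ≃ₗ[R] (∀ i, N i)) := by
  let splitM := (LinearEquiv.piCongrLeft R M (Equiv.sigmaFiberEquiv p)).symm ≪≫ₗ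
    LinearEquiv.piCurry R fun (q : Q) (i : {i // p i = q}) => M i
  let splitN := (LinearEquiv.piCongrLeft R N (Equiv.sigmaFiberEquiv p)).symm ≪≫ₗ
    LinearEquiv.piCurry R fun (q : Q) (i : {i // p i = q}) => N i
  exact ⟨splitM ≪≫ₗ LinearEquiv.piCongrRight (fun q => (h q).some) ≪≫ₗ splitN.symm⟩

theorem nonempty_pi_linearEquiv_prod_of_forall_eq_or_eq {a b : I} (hab : a ≠ b)
    (h : ∀ i, i = a ∨ i = b) :
    Nonempty ((∀ i, M i) ≃ₗ[R] (M a × M b)) := by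
  classical
  refine ⟨.ofBijective ((LinearMap.proj a).prod (LinearMap.proj b)) ⟨fun x y hxy => ?_, ?_⟩⟩
  · obtain ⟨ha, hb⟩ := Prod.ext_iff.1 hxy
    ext i
    rcases h i with rfl | rfl
    exacts [ha, hb]
  · rintro ⟨x, y⟩
    exact ⟨Pi.single a x + Pi.single b y, by simp [hab, hab.symm]⟩

theorem nonempty_pi_linearEquiv_of_involutive {β : I → I} (hβ : Function.Involutive β)
    (hfixed : ∀ i, β i = i → Nonempty (M i ≃ₗ[R] N i))
    (hpair : ∀ i, β i ≠ i → Nonempty ((M i × M (β i)) ≃ₗ[R] (N i × N (β i)))) :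
    Nonempty ((∀ i, M i) ≃ₗ[R] (∀ i, N i)) := by
  let orbit : Setoid I := Setoid.ker fun i => s(i, β i)
  refine nonempty_pi_linearEquiv_of_fibers (Quotient.mk orbit) (Quotient.ind fun k => ?_)
  let a : {i // Quotient.mk orbit i = Quotient.mk orbit k} := ⟨k, rfl⟩
  let b : {i // Quotient.mk orbit i = Quotient.mk orbit k} :=
    ⟨β k, Quotient.sound (by simp [orbit, hβ k])⟩
  have h_ab (i : {i // Quotient.mk orbit i = Quotient.mk orbit k}) : i = a ∨ i = b :=
    (Sym2.eq_iff.1 (Quotient.exact i.2)).imp (fun h => Subtype.ext h.1) fun h => Subtype.ext h.1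
  by_cases hk : β k = k
  · refine ⟨LinearEquiv.piCongrRight fun i => (hfixed i ?_).some⟩
    rcases h_ab i with rfl | rfl
    exacts [hk, congrArg β hk]
  · have hne : a ≠ b := fun h => hk (congrArg Subtype.val h).symm
    obtain ⟨eM⟩ := nonempty_pi_linearEquiv_prod_of_forall_eq_or_eq (R := R)
      (M := fun i => M i.1) hne h_ab
    obtain ⟨eN⟩ := nonempty_pi_linearEquiv_prod_of_forall_eq_or_eq (R := R)
      (M := fun i => N i.1) hne h_ab
    obtain ⟨e⟩ := hpair k hk
    exact ⟨eM ≪≫ₗ e ≪≫ₗ eN.symm⟩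

end Products

section ProductsOfBiuniformModules

variable {R : Type*} [Ring R] {I : Type*}

theorem nonempty_pi_linearEquiv_of_sameClasses_involutive {M N : I → Type*}
    [∀ i, AddCommGroup (M i)] [∀ i, Module R (M i)]
    [∀ i, AddCommGroup (N i)] [∀ i, Module R (N i)]
    (hM : ∀ i, IsBiuniformModule R (M i)) {β : I → I} (hβ : Function.Involutive β)
    (hm : ∀ i, SameMonogenyClass R (N i) (M i))
    (he : ∀ i, SameEpigenyClass R (N i) (M (β i))) :
    Nonempty ((∀ i, M i) ≃ₗ[R] (∀ i, N i)) := by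
  have he' {i j : I} (h : β i = j) : SameEpigenyClass R (N i) (M j) := h ▸ he i
  refine nonempty_pi_linearEquiv_of_involutive hβ (fun i hi => ?_) fun i _ => ?_
  · exact nonempty_linearEquiv_of_sameClasses (hM i).uniform
      ((he' hi).symm.isHollowModule (hM i).hollow) (hm i).symm (he' hi).symm
  · exact nonempty_prod_linearEquiv_prod_of_sameClasses (hM i) (hM (β i)) (hm i) (he i)
      (hm (β i)) (he' (hβ i))

theorem nonempty_pi_linearEquiv_of_sameClasses_perm {U V : I → Type*}
    [∀ i, AddCommGroup (U i)] [∀ i, Module R (U i)]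
    [∀ i, AddCommGroup (V i)] [∀ i, Module R (V i)]
    (hV : ∀ i, IsBiuniformModule R (V i)) (π : Equiv.Perm I)
    (hm : ∀ i, SameMonogenyClass R (U i) (V i))
    (he : ∀ i, SameEpigenyClass R (U i) (V (π i))) :
    Nonempty ((∀ i, U i) ≃ₗ[R] (∀ i, V i)) := by
  obtain ⟨β, hβ, hβπ, hcycle⟩ := exists_involutive_involutive_comp π
  have hmixed (i : I) : HasMixedClass R (V i) (V (β i)) :=
    rel_of_sameCycle (HasMixedClass.equivalence hV) (fun i => .of_sameClasses (hm i) (he i))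
      (hcycle i)
  choose W hWm hWe using hmixed
  have hW (i : I) : IsBiuniformModule R (W i) :=
    ⟨(hWm i).symm.isUniformModule (hV i).uniform, (hWe i).symm.isHollowModule (hV (β i)).hollow⟩
  have hUW (i : I) : SameEpigenyClass R (U i) (W ((β ∘ π) i)) := by
    have hWπ := hWe (β (π i))
    rw [hβ (π i)] at hWπ
    exact (he i).trans hWπ.symm
  obtain ⟨eVW⟩ := nonempty_pi_linearEquiv_of_sameClasses_involutive hV hβ hWm hWe
  obtain ⟨eWU⟩ := nonempty_pi_linearEquiv_of_sameClasses_involutive hW hβπ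
    (fun i => (hm i).trans (hWm i).symm) hUW
  exact ⟨(eVW ≪≫ₗ eWU).symm⟩

theorem direct_products_of_uniserial_isomorphic_general {J : Type*}
    (U : I → Type*) (V : J → Type*)
    [∀ i, AddCommGroup (U i)] [∀ i, Module R (U i)]
    [∀ j, AddCommGroup (V j)] [∀ j, Module R (V j)]
    (hU : ∀ i, IsBiuniformModule R (U i)) (σ τ : I ≃ J)
    (hm : ∀ i, SameMonogenyClass R (U i) (V (σ i)))
    (he : ∀ i, SameEpigenyClass R (U i) (V (τ i))) :
    Nonempty ((∀ i, U i) ≃ₗ[R] (∀ j, V j)) := by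
  have hV (j : J) : IsBiuniformModule R (V j) := by
    constructor
    · obtain ⟨i, rfl⟩ := σ.surjective j
      exact (hm i).isUniformModule (hU i).uniform
    · obtain ⟨i, rfl⟩ := τ.surjective j
      exact (he i).isHollowModule (hU i).hollow
  obtain ⟨π, rfl⟩ : ∃ π : Equiv.Perm I, τ = π.trans σ :=
    ⟨τ.trans σ.symm, by simp [Equiv.trans_assoc]⟩
  obtain ⟨e⟩ := nonempty_pi_linearEquiv_of_sameClasses_perm (fun i => hV (σ i)) π hm he
  exact ⟨e ≪≫ₗ LinearEquiv.piCongrLeft R V σ⟩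

end ProductsOfBiuniformModules

/-- If two families of nonzero uniserial modules have their monogeny classes and epigeny
classes matched by bijections, then their direct products are isomorphic. -/
theorem direct_products_of_uniserial_isomorphic
    {R : Type*} [Ring R] {I J : Type*}
    (U : I → Type*) (V : J → Type*)
    [∀ i, AddCommGroup (U i)] [∀ i, Module R (U i)]
    [∀ j, AddCommGroup (V j)] [∀ j, Module R (V j)]
    (hU : ∀ i, IsUniserialModule R (U i)) (hU0 : ∀ i, ∃ x : U i, x ≠ 0)
    (hV : ∀ j, IsUniserialModule R (V j)) (hV0 : ∀ j, ∃ x : V j, x ≠ 0)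
    (σ τ : I ≃ J)
    (hm : ∀ i, SameMonogenyClass R (U i) (V (σ i)))
    (he : ∀ i, SameEpigenyClass R (U i) (V (τ i))) :
    Nonempty (((i : I) → U i) ≃ₗ[R] ((j : J) → V j)) := by
  have hU_biuniform (i : I) : IsBiuniformModule R (U i) :=
    let ⟨x, hx⟩ := hU0 i
    have := nontrivial_of_ne x 0 hx
    (hU i).isBiuniformModule
  exact direct_products_of_uniserial_isomorphic_general U V hU_biuniform σ τ hm he
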